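/- arXiv:1805.10051 — 3 statements merged into one kernel-verified Lean document; each statement's English description precedes it below -/
import Mathlib

section
/- A cyclic hinge that can be put in normal form is torsion-free: if a cyclic path of edges (u_i:p_i, γ_{i+1}, u_{i+1}:q_{i+1}) ∈ E(G), i = 0,…,m, with u_{m+1} = u_0, is in normal form, then it does not constitute a torsion, i.e., every k-face F at u_0 satisfying the hinge conditions is mapped to itself by the composed gluings. -/
namespace CDDM

open Equiv Set

/-- The set of ports `π = {0,…,n+1}`. -/
abbrev Port (n : ℕ) := Fin (n + 2)

/-- Gluings are the odd permutations of the ports. -/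
def IsGluing {n : ℕ} (γ : Equiv.Perm (Port n)) : Prop := Equiv.Perm.sign γ = -1

/-- Rotations are the even permutations of the ports. -/
def IsRotation {n : ℕ} (r : Equiv.Perm (Port n)) : Prop := Equiv.Perm.sign r = 1

/-- An (oriented) edge `(u:p, γ, v:q)`. -/
@[ext] structure Edge (n : ℕ) (α : Type) where
  u : α
  p : Port n
  γ : Equiv.Perm (Port n)
  v : α
  q : Port n

/-- The inverse edge `(v:q, γ⁻¹, u:p)`. -/
def Edge.inv {n : ℕ} {α : Type} (e : Edge n α) : Edge n α := ⟨e.v, e.q, e.γ⁻¹, e.u, e.p⟩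

/-- Raw data of a graph: vertices, semi-edges and edges. -/
@[ext] structure RawGraph (n : ℕ) (α : Type) where
  verts : Set α
  semis : Set (α × Port n)
  edges : Set (Edge n α)

variable {n : ℕ} {α β : Type}

/-- The ports of a vertex: those appearing in `S(G) ∪ E(G)`. -/
def RawGraph.portsAt (G : RawGraph n α) (u : α) : Set (Port n) :=
  {p | (u, p) ∈ G.semis ∨ ∃ e ∈ G.edges, e.u = u ∧ e.p = p}

/-- The five defining conditions of graphs (plus membership of endpoints and
gluings being odd permutations). -/
def RawGraph.IsGraph (G : RawGraph n α) : Prop :=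
  (∀ s ∈ G.semis, s.1 ∈ G.verts) ∧
  (∀ e ∈ G.edges, e.u ∈ G.verts ∧ e.v ∈ G.verts ∧ IsGluing e.γ) ∧
  -- (i) semi-edges and edges are disjoint per port
  (∀ e ∈ G.edges, (e.u, e.p) ∉ G.semis) ∧
  -- (ii) each port occurs in at most one edge
  (∀ e ∈ G.edges, ∀ e' ∈ G.edges, e.u = e'.u → e.p = e'.p → e = e') ∧
  -- (iii) each vertex has exactly n+1 ports
  (∀ u ∈ G.verts, (G.portsAt u).ncard = n + 1) ∧
  -- (iv) the gluing maps the ports of the source onto the ports of the target, sending p to q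
  (∀ e ∈ G.edges, (⇑e.γ) '' G.portsAt e.u = G.portsAt e.v ∧ e.γ e.p = e.q) ∧
  -- (v) edges come in inverse pairs
  (∀ e ∈ G.edges, e.inv ∈ G.edges)

/-- Action of the vertex rotation `r_u` on a single edge. -/
noncomputable def rotEdge (r : Equiv.Perm (Port n)) (u : α) (e : Edge n α) : Edge n α :=
  letI := Classical.decEq α
  ⟨e.u, if e.u = u then r e.p else e.p,
   (if e.v = u then r * e.γ else e.γ) * (if e.u = u then r⁻¹ else 1),
   e.v, if e.v = u then r e.q else e.q⟩

/-- The vertex rotation `r_u` applied to a graph. -/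
noncomputable def rotG (r : Equiv.Perm (Port n)) (u : α) (G : RawGraph n α) : RawGraph n α :=
  letI := Classical.decEq α
  { verts := G.verts
    semis := (fun s => if s.1 = u then (s.1, r s.2) else s) '' G.semis
    edges := rotEdge r u '' G.edges }

/-- A rotation sequence: a finite composition of vertex rotations. -/
abbrev RotSeq (n : ℕ) (α : Type) := List (α × Equiv.Perm (Port n))

/-- Application of a rotation sequence to a graph. -/
noncomputable def applySeq (s : RotSeq n α) (G : RawGraph n α) : RawGraph n α :=
  s.foldr (fun x H => rotG x.2 x.1 H) G

/-- All members of the sequence are rotations (even permutations). -/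
def IsRotSeq (s : RotSeq n α) : Prop := ∀ x ∈ s, IsRotation x.2

/-- `(r̄ / u)`: the ordered composition of the rotations of `r̄` at the vertex `u`. -/
noncomputable def seqAt (s : RotSeq n α) (u : α) : Equiv.Perm (Port n) :=
  letI := Classical.decEq α
  s.foldr (fun x g => if x.1 = u then x.2 * g else g) 1

/-- The rotation sequence acts at vertex `u`. -/
def SeqActsAt (s : RotSeq n α) (u : α) : Prop := ∃ x ∈ s, x.1 = u

/-- Consistency of two rotation sequences: whenever both act upon a common vertex,
their compositions at that vertex coincide. -/
def SeqConsistent (s₁ s₂ : RotSeq n α) : Prop :=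
  ∀ u : α, SeqActsAt s₁ u → SeqActsAt s₂ u → seqAt s₁ u = seqAt s₂ u

/-- The inverse of a rotation sequence. -/
def invSeq (s : RotSeq n α) : RotSeq n α := (s.map (fun x => (x.1, x.2⁻¹))).reverse

/-- Consistency of two graphs. -/
def Consistent (G H : RawGraph n α) : Prop :=
  ∀ u ∈ G.verts ∩ H.verts, ∀ v ∈ G.verts ∪ H.verts,
    ∀ (i j : Port n) (γ : Equiv.Perm (Port n)),
      (Edge.mk u i γ v j ∈ G.edges ∨ (u, i) ∈ G.semis) ↔
      (Edge.mk u i γ v j ∈ H.edges ∨ (u, i) ∈ H.semis)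

/-- Union of two (consistent) graphs: semi-edges are the ports occurring as
semi-edges in `G` or `H` and in no edge of `E(G) ∪ E(H)`. -/
def unionG (G H : RawGraph n α) : RawGraph n α where
  verts := G.verts ∪ H.verts
  semis := {s | s ∈ G.semis ∪ H.semis ∧ ∀ e ∈ G.edges ∪ H.edges, ¬(e.u = s.1 ∧ e.p = s.2)}
  edges := G.edges ∪ H.edges

/-- Union of a family of graphs. -/
def unionFam {ι : Type} (Gs : ι → RawGraph n α) : RawGraph n α where
  verts := ⋃ i, (Gs i).verts
  semis := {s | (∃ i, s ∈ (Gs i).semis) ∧ ∀ i, ∀ e ∈ (Gs i).edges, ¬(e.u = s.1 ∧ e.p = s.2)}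
  edges := ⋃ i, (Gs i).edges

/-- A path of `k` edges `(u_i:p_i, γ_{i+1}, u_{i+1}:q_{i+1})` in `G`. -/
def IsPath (G : RawGraph n α) (k : ℕ) (u : Fin (k+1) → α)
    (p : Fin k → Port n) (γ : Fin k → Equiv.Perm (Port n)) (q : Fin k → Port n) : Prop :=
  ∀ i : Fin k, Edge.mk (u i.castSucc) (p i) (γ i) (u i.succ) (q i) ∈ G.edges

/-- `γ_i ∘ ⋯ ∘ γ_1`: the composition of the first `i` gluings of the path. -/
def compUpTo {n k : ℕ} (γ : Fin k → Equiv.Perm (Port n)) (i : ℕ) : Equiv.Perm (Port n) :=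
  (((List.ofFn γ).take i).reverse).prod

/-- The hinge conditions: `p_i, q_i ∉ (γ_i ∘ ⋯ ∘ γ_1)(F)`. -/
def HingeConds {n k : ℕ} (p : Fin k → Port n) (γ : Fin k → Equiv.Perm (Port n))
    (q : Fin k → Port n) (F : Set (Port n)) : Prop :=
  ∀ i : Fin k, p i ∉ (⇑(compUpTo γ i.val)) '' F ∧ q i ∉ (⇑(compUpTo γ (i.val + 1))) '' F

/-- A hinge of length `k` starting at the face `F` at `u 0`. -/
def IsHinge (G : RawGraph n α) (k : ℕ) (u : Fin (k+1) → α)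
    (p : Fin k → Port n) (γ : Fin k → Equiv.Perm (Port n)) (q : Fin k → Port n)
    (F : Set (Port n)) : Prop :=
  IsPath G k u p γ q ∧ F.Nonempty ∧ F ⊆ G.portsAt (u 0) ∧ HingeConds p γ q F

/-- Equivalence of faces: `F` at `u` and `F'` at `u'` are related by a hinge. -/
def EquivFace (G : RawGraph n α) (u : α) (F : Set (Port n)) (u' : α) (F' : Set (Port n)) :
    Prop :=
  ∃ (k : ℕ) (w : Fin (k+1) → α) (p : Fin k → Port n) (γ : Fin k → Equiv.Perm (Port n))
    (q : Fin k → Port n), IsHinge G k w p γ q F ∧ w 0 = u ∧ w (Fin.last k) = u' ∧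
      F' = (⇑(compUpTo γ k)) '' F

/-- A torsion: a hinge around two distinct faces at the same vertex. -/
def HasTorsion (G : RawGraph n α) : Prop :=
  ∃ (u : α) (F F' : Set (Port n)), F ≠ F' ∧ EquivFace G u F u F'

/-- `s`-bounded-star: every hinge has length at most `s`. -/
def BoundedStar (G : RawGraph n α) (s : ℕ) : Prop :=
  ∀ (k : ℕ) (u : Fin (k+1) → α) (p : Fin k → Port n) (γ : Fin k → Equiv.Perm (Port n))
    (q : Fin k → Port n) (F : Set (Port n)), IsHinge G k u p γ q F → k ≤ s

/-- A path is in normal form. -/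
def NormalForm (G : RawGraph n α) {k : ℕ} (u : Fin (k+1) → α)
    (p : Fin k → Port n) (γ : Fin k → Equiv.Perm (Port n)) (q : Fin k → Port n) : Prop :=
  ∀ i : Fin k, γ i = Equiv.swap (p i) (q i) ∧
    G.portsAt (u i.succ) = insert (q i) (G.portsAt (u i.castSucc) \ {p i})

/-- The covering semi-edges of a face `F` at `u`. -/
def coveringSemis (G : RawGraph n α) (u : α) (F : Set (Port n)) : Set (α × Port n) :=
  {s | s ∈ G.semis ∧ ∃ F', EquivFace G u F s.1 F' ∧ s.2 ∉ F'}

/-- Geometrical neighbors: vertices sharing an equivalent face. -/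
def GeomNeighbor (G : RawGraph n α) (u u' : α) : Prop :=
  ∃ F F', EquivFace G u F u' F'

/-- Induced subgraph on a set of vertices, breaking outgoing edges into semi-edges. -/
def inducedSub (G : RawGraph n α) (W : Set α) : RawGraph n α where
  verts := G.verts ∩ W
  semis := {s | s.1 ∈ G.verts ∩ W ∧
    (s ∈ G.semis ∨ ∃ e ∈ G.edges, e.u = s.1 ∧ e.p = s.2 ∧ e.v ∉ W)}
  edges := {e ∈ G.edges | e.u ∈ W ∧ e.v ∈ W}

/-- The star of a vertex: the subgraph induced by `u` and its geometrical neighbors. -/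
def geomStar (G : RawGraph n α) (u : α) : RawGraph n α :=
  inducedSub G {v | v = u ∨ GeomNeighbor G u v}

/-- Adjacency via edges. -/
def Adj (G : RawGraph n α) (u v : α) : Prop := ∃ e ∈ G.edges, e.u = u ∧ e.v = v

/-- Graph distance at most `d`. -/
inductive ReachLE (G : RawGraph n α) : ℕ → α → α → Prop
  | refl (d : ℕ) (u : α) : ReachLE G d u u
  | step {d : ℕ} {u v w : α} : Adj G u v → ReachLE G d v w → ReachLE G (d+1) u w

/-- The ball of radius `d` around `v`. -/
def ball (G : RawGraph n α) (v : α) (d : ℕ) : Set α := {u | ReachLE G d v u}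

/-- The disk `G^r_v`: subgraph induced by vertices at graph distance at most `r+1`,
with outgoing edges broken into semi-edges. -/
def disk (G : RawGraph n α) (v : α) (r : ℕ) : RawGraph n α :=
  inducedSub G (ball G v (r+1))

/-- Being a disk of radius `r` (an element of `D^r`). -/
def IsDisk (D : RawGraph n α) (r : ℕ) : Prop :=
  ∃ (G : RawGraph n α) (v : α), G.IsGraph ∧ v ∈ G.verts ∧ D = disk G v r

/-- Subgraph relation. -/
def Subgraph (H G : RawGraph n α) : Prop := H.verts ⊆ G.verts ∧ H.edges ⊆ G.edges

/-- Compound names: finite sets of pairs `(u, i)` representing `{u.i, v.j, …}`. -/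
abbrev CName := Finset (ℕ × ℕ)

/-- Renaming of graphs along a map on vertex names. -/
def mapG (R : α → β) (G : RawGraph n α) : RawGraph n β where
  verts := R '' G.verts
  semis := (fun s => (R s.1, s.2)) '' G.semis
  edges := (fun e => Edge.mk (R e.u) e.p e.γ (R e.v) e.q) '' G.edges

/-- `R*`: renaming of compound names. -/
def mapCN (R : ℕ → ℕ) (c : CName) : CName := c.image (fun x => (R x.1, x.2))

/-- A local rule of radius `r` over the universe of names `ℕ`, with bound `b`. -/
structure LocalRule (n r : ℕ) where
  f : RawGraph n ℕ → RawGraph n CName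
  b : ℕ
  isGraph : ∀ D, IsDisk D r → (f D).IsGraph
  bound : ∀ D, IsDisk D r → ∀ c ∈ (f D).verts, ∀ x ∈ c, x.1 ∈ D.verts ∧ x.2 ≤ b
  consist : ∀ G : RawGraph n ℕ, G.IsGraph → ∀ v ∈ G.verts, ∀ w ∈ G.verts,
    Consistent (f (disk G v r)) (f (disk G w r))
  equivar : ∀ R : ℕ ≃ ℕ, ∀ D, IsDisk D r → f (mapG R D) = mapG (mapCN R) (f D)

/-- The global dynamics induced by a local rule: `F(G) = ⋃_{v ∈ G} f(G^r_v)`. -/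
noncomputable def induced (f : RawGraph n ℕ → RawGraph n CName) (r : ℕ)
    (G : RawGraph n ℕ) : RawGraph n CName :=
  unionFam (fun v : G.verts => f (disk G (v : ℕ) r))

/-- A dynamics is rotation-commuting. -/
def RotCommuting {n : ℕ} (F : RawGraph n ℕ → RawGraph n CName) : Prop :=
  ∀ G : RawGraph n ℕ, G.IsGraph → ∀ s : RotSeq n ℕ, IsRotSeq s →
    ∃ s' : RotSeq n CName, IsRotSeq s' ∧ F (applySeq s G) = applySeq s' (F G)

/-- An intersecting pair of disks `D₁, D₂` of a common graph. -/
def IntersectingDiskPair (r : ℕ) (D₁ D₂ : RawGraph n ℕ) : Prop :=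
  ∃ (G : RawGraph n ℕ) (v₁ v₂ : ℕ), G.IsGraph ∧ v₁ ∈ G.verts ∧ v₂ ∈ G.verts ∧
    D₁ = disk G v₁ r ∧ D₂ = disk G v₂ r ∧ (D₁.verts ∩ D₂.verts).Nonempty

/-- A local rule is strongly-rotation-commuting. -/
def StronglyRotCommuting {n r : ℕ} (L : LocalRule n r) : Prop :=
  (∀ D, IsDisk D r → ∀ s : RotSeq n ℕ, IsRotSeq s →
    ∃ s' : RotSeq n CName, IsRotSeq s' ∧ L.f (applySeq s D) = applySeq s' (L.f D)) ∧
  (∀ D₁ D₂, IntersectingDiskPair r D₁ D₂ → ∀ s : RotSeq n ℕ, IsRotSeq s →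
    ∀ s₁ s₂ : RotSeq n CName, IsRotSeq s₁ → IsRotSeq s₂ →
      L.f (applySeq s D₁) = applySeq s₁ (L.f D₁) →
      L.f (applySeq s D₂) = applySeq s₂ (L.f D₂) →
      ∀ c ∈ (L.f D₁).verts ∩ (L.f D₂).verts, seqAt s₁ c = seqAt s₂ c)

/-- The transposition `s₀₁` of the ports 0 and 1. -/
def sw01 (n : ℕ) : Equiv.Perm (Port n) := Equiv.swap 0 1

/-- The canonical sphere `∂Δ_{n+1}` on the vertex names `φ 0, …, φ (n+1)`. -/
def sphereAt {n : ℕ} {α : Type} (φ : Fin (n+2) → α) : RawGraph n α where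
  verts := Set.range φ
  semis := ∅
  edges := {e | ∃ i j : Fin (n+2), i ≠ j ∧ e = ⟨φ i, j, Equiv.swap i j, φ j, i⟩}

/-- A bistellar move: replacing the part `H = φ '' W` of a canonical sphere lying in `G`
by its complement `s̄ H*`. -/
def BistellarMove (G G' : RawGraph n α) : Prop :=
  ∃ (φ : Fin (n+2) → α) (W : Set (Fin (n+2))),
    Function.Injective φ ∧ W.Nonempty ∧ W ≠ Set.univ ∧
    (∀ i ∈ W, φ i ∈ G.verts) ∧ (∀ i ∉ W, φ i ∉ G.verts) ∧
    (∀ i ∈ W, ∀ j ∈ W, i ≠ j → Edge.mk (φ i) j (Equiv.swap i j) (φ j) i ∈ G.edges) ∧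
    (∀ i ∈ W, G.portsAt (φ i) = {j | j ≠ i}) ∧
    G'.verts = (G.verts \ (φ '' W)) ∪ (φ '' Wᶜ) ∧
    G'.edges =
      ({e ∈ G.edges | e.u ∉ φ '' W ∧ e.v ∉ φ '' W} ∪
       {e | ∃ i j : Fin (n+2), i ∉ W ∧ j ∉ W ∧ i ≠ j ∧
          e = Edge.mk (φ i) (sw01 n j) (sw01 n * Equiv.swap i j * sw01 n) (φ j) (sw01 n i)} ∪
       {e | ∃ e' ∈ G.edges, ∃ i ∈ W, e'.u = φ i ∧ e'.v ∉ φ '' W ∧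
          (e = Edge.mk (φ e'.p) (sw01 n i) (e'.γ * (Equiv.swap i e'.p * sw01 n)) e'.v e'.q ∨
           e = Edge.mk e'.v e'.q (e'.γ * (Equiv.swap i e'.p * sw01 n))⁻¹ (φ e'.p) (sw01 n i))}) ∧
    G'.semis =
      ({s ∈ G.semis | s.1 ∉ φ '' W} ∪
       {s | ∃ j ∈ W, ∃ p : Fin (n+2), p ∉ W ∧ (φ j, p) ∈ G.semis ∧ s = (φ p, sw01 n j)})

/-- A graph-local inverse shelling: gluing a fresh vertex `v` onto a set `S` of at most `n`
free ports of `u`, via the gluing `s₀₁`. -/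
def LocalInvShelling (G G' : RawGraph n α) : Prop :=
  ∃ u ∈ G.verts, ∃ (S : Set (Port n)) (v : α),
    v ∉ G.verts ∧ S.ncard ≤ n ∧ (∀ p ∈ S, (u, p) ∈ G.semis) ∧
    G'.verts = insert v G.verts ∧
    G'.edges = G.edges ∪ {e | ∃ p ∈ S, e = Edge.mk u p (sw01 n) v (sw01 n p) ∨
                                        e = Edge.mk v (sw01 n p) (sw01 n) u p} ∧
    G'.semis = (G.semis \ {s | s.1 = u ∧ s.2 ∈ S}) ∪
               {s | ∃ p ∈ G.portsAt u \ S, s = (v, sw01 n p)}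

/-- Graph-local Pachner moves: vertex rotations, bistellar moves, and
graph-local (inverse) shellings. -/
inductive PachnerMove (n : ℕ) {α : Type} : RawGraph n α → RawGraph n α → Prop
  | rot {G : RawGraph n α} {r : Equiv.Perm (Port n)} {u : α} :
      IsRotation r → u ∈ G.verts → PachnerMove n G (rotG r u G)
  | bist {G G' : RawGraph n α} : BistellarMove G G' → PachnerMove n G G'
  | bistInv {G G' : RawGraph n α} : BistellarMove G' G → PachnerMove n G G'
  | shellInv {G G' : RawGraph n α} : LocalInvShelling G G' → PachnerMove n G G'
  | shell {G G' : RawGraph n α} : LocalInvShelling G' G → PachnerMove n G G'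

/-- `Δ_n`: a single vertex, all of whose `n+1` ports are semi-edges. -/
def IsSimplexGraph (G : RawGraph n α) : Prop :=
  ∃ (v : α) (P : Set (Port n)), P.ncard = n + 1 ∧ G.verts = {v} ∧ G.edges = ∅ ∧
    G.semis = {s | s.1 = v ∧ s.2 ∈ P}

/-- A discrete manifold: the star of every vertex can be sent onto `Δ_n` by
graph-local Pachner moves. -/
def DiscreteManifold (G : RawGraph n α) : Prop :=
  G.IsGraph ∧ ∀ u ∈ G.verts,
    ∃ H : RawGraph n α, Relation.ReflTransGen (PachnerMove n) (geomStar G u) H ∧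
      IsSimplexGraph H

/-- A standard inverse shelling `G.F` at a border `k`-face `F` at `u` having exactly
`n-k` covering semi-edges. -/
def StdInvShelling (G G' : RawGraph n α) : Prop :=
  ∃ u ∈ G.verts, ∃ (F : Set (Port n)) (k : ℕ),
    F ⊆ G.portsAt u ∧ F.ncard = k + 1 ∧
    (coveringSemis G u F).Nonempty ∧ (coveringSemis G u F).ncard = n - k ∧
    ∃ v : α, v ∉ G.verts ∧ G'.IsGraph ∧ ¬ HasTorsion G' ∧
      G'.verts = insert v G.verts ∧
      G'.edges = G.edges ∪ {e | ∃ s ∈ coveringSemis G u F,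
        e = Edge.mk s.1 s.2 (sw01 n) v (sw01 n s.2) ∨
        e = Edge.mk v (sw01 n s.2) (sw01 n) s.1 s.2} ∧
      (∀ s : α × Port n, s.1 ≠ v → (s ∈ G'.semis ↔ s ∈ G.semis ∧ s ∉ coveringSemis G u F))

/-!
Along a path in normal form a face does not move at all. The transposition of `p` and `q` fixes
every port other than `p` and `q`, and the hinge conditions keep `p` out of the face. As for `q`:
were it a port of the source other than `p`, the transposition would make `p` a port of the target,
whereas normal form removes `p`. So the face avoids `q` as well, and remains a face of the target.
-/

theorem notMem_of_swap_image_eq_insert_sdiff {ι : Type*} [DecidableEq ι] {a b : ι} {P : Set ι}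
    (hP : swap a b '' P = insert b (P \ {a})) : b ∉ P \ {a} := by
  rintro ⟨hbP, hba : b ≠ a⟩
  have ha : a ∈ insert b (P \ {a}) := hP ▸ ⟨b, hbP, swap_apply_right a b⟩
  rcases ha with hab | ⟨-, haa⟩
  · exact hba hab.symm
  · exact haa rfl

theorem eqOn_swap_id {ι : Type*} [DecidableEq ι] {a b : ι} {F : Set ι} (ha : a ∉ F) (hb : b ∉ F) :
    EqOn (swap a b) id F := fun _ hx =>
  swap_apply_of_ne_of_ne (ne_of_mem_of_not_mem hx ha) (ne_of_mem_of_not_mem hx hb)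

theorem compUpTo_succ {k : ℕ} (γ : Fin k → Perm (Port n)) (i : Fin k) :
    compUpTo γ (i + 1) = γ i * compUpTo γ i := by
  have hi : (i : ℕ) < (List.ofFn γ).length := by simp
  simp [compUpTo, List.take_succ_eq_append_getElem hi]

/-- The condition that `NormalForm` imposes on each edge of a path: the gluing is the transposition
of the two glued ports, and the remaining ports of the two endpoints are the same. -/
def Edge.IsNormal (G : RawGraph n α) (e : Edge n α) : Prop :=
  e.γ = swap e.p e.q ∧ G.portsAt e.v = insert e.q (G.portsAt e.u \ {e.p})

theorem RawGraph.IsGraph.image_portsAt {G : RawGraph n α} (hG : G.IsGraph) {e : Edge n α}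
    (he : e ∈ G.edges) : e.γ '' G.portsAt e.u = G.portsAt e.v :=
  (hG.2.2.2.2.2.1 e he).1

namespace Edge.IsNormal

variable {G : RawGraph n α} {e : Edge n α} {F : Set (Port n)}

theorem subset_portsAt (h : e.IsNormal G) (hF : F ⊆ G.portsAt e.u) (hp : e.p ∉ F) :
    F ⊆ G.portsAt e.v := by
  rw [h.2]
  exact (subset_sdiff_singleton hF hp).trans (subset_insert _ _)

theorem eqOn_id (h : e.IsNormal G) (hG : G.IsGraph) (he : e ∈ G.edges)
    (hF : F ⊆ G.portsAt e.u) (hp : e.p ∉ F) : EqOn e.γ id F := by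
  have hswap : swap e.p e.q '' G.portsAt e.u = insert e.q (G.portsAt e.u \ {e.p}) := by
    rw [← h.1, hG.image_portsAt he, h.2]
  have hq : e.q ∉ F := fun hqF =>
    notMem_of_swap_image_eq_insert_sdiff hswap (subset_sdiff_singleton hF hp hqF)
  rw [h.1]
  exact eqOn_swap_id hp hq

end Edge.IsNormal

theorem NormalForm.eqOn_compUpTo_id_and_subset_portsAt {G : RawGraph n α} (hG : G.IsGraph) {k : ℕ}
    {u : Fin (k + 1) → α} {p : Fin k → Port n} {γ : Fin k → Perm (Port n)} {q : Fin k → Port n}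
    (hpath : IsPath G k u p γ q) (hnf : NormalForm G u p γ q) {F : Set (Port n)}
    (hF : F ⊆ G.portsAt (u 0)) (hinge : HingeConds p γ q F) (i : Fin (k + 1)) :
    EqOn (compUpTo γ i) id F ∧ F ⊆ G.portsAt (u i) := by
  induction i using Fin.induction with
  | zero => exact ⟨fun _ _ => rfl, hF⟩
  | succ i ih =>
    obtain ⟨hfix, hsub⟩ := ih
    have hnormal : (Edge.mk (u i.castSucc) (p i) (γ i) (u i.succ) (q i)).IsNormal G := hnf i
    have hp : p i ∉ F := hfix.image_eq_self ▸ (hinge i).1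
    refine ⟨fun x hx => ?_, hnormal.subset_portsAt hsub hp⟩
    calc compUpTo γ (i + 1) x = γ i (compUpTo γ i x) := by rw [compUpTo_succ, Perm.mul_apply]
      _ = γ i x := congrArg (γ i) (hfix hx)
      _ = x := hnormal.eqOn_id hG (hpath i) hsub hp hx

theorem cyclic_normal_form_torsion_free_general {G : RawGraph n α} (hG : G.IsGraph) {k : ℕ}
    {u : Fin (k + 1) → α} {p : Fin k → Port n} {γ : Fin k → Perm (Port n)} {q : Fin k → Port n}
    (hpath : IsPath G k u p γ q) (hnf : NormalForm G u p γ q) {F : Set (Port n)}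
    (hF : F ⊆ G.portsAt (u 0)) (hinge : HingeConds p γ q F) : EqOn (compUpTo γ k) id F :=
  (hnf.eqOn_compUpTo_id_and_subset_portsAt hG hpath hF hinge (Fin.last k)).1

/-- A cyclic hinge that can be put in normal form is torsion-free. -/
theorem cyclic_normal_form_torsion_free {n : ℕ} {α : Type} (G : RawGraph n α)
    (hG : G.IsGraph) (m : ℕ) (u : Fin (m+2) → α) (p : Fin (m+1) → Port n)
    (γ : Fin (m+1) → Equiv.Perm (Port n)) (q : Fin (m+1) → Port n)
    (hpath : IsPath G (m+1) u p γ q) (hcyc : u (Fin.last (m+1)) = u 0)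
    (hnf : NormalForm G u p γ q) :
    ∀ (F : Set (Port n)) (kk : ℕ), F ⊆ G.portsAt (u 0) → F.ncard = kk + 1 →
      HingeConds p γ q F → (⇑(compUpTo γ (m+1))) '' F = F := fun _ _ hF _ hinge =>
  (cyclic_normal_form_torsion_free_general hG hpath hnf hF hinge).image_eq_self

end CDDM
end

section
/- The canonical sphere ∂Δ_{n+1} — the complete graph on n+2 vertices v_0,…,v_{n+1} with edges (v_i:j, s_{ij}, v_j:i) for all i ≠ j in {0,…,n+1}, where s_{ij} is the transposition of i and j — is a graph (it satisfies the five defining conditions of graphs), every hinge in it is in normal form, and consequently it contains no torsion. -/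
namespace CDDM

open Equiv Set

variable {n : ℕ} {α β : Type}

/-!
Crossing an edge in normal form trades the port `p` for the port `q` and fixes all others. Since
both endpoints have `n + 1` ports, `q` cannot be a port of the source other than `p`; so a face
which avoids `p` also avoids `q`, and the transposition of `p` and `q` fixes it pointwise. Hence
hinges in normal form carry every face to itself. In the canonical sphere the ports of `φ i` are all
those other than `i`, so every edge is in normal form.
-/

theorem image_swap_of_notMem {ι : Type*} [DecidableEq ι] {a b : ι} {s : Set ι}
    (ha : a ∉ s) (hb : b ∉ s) : swap a b '' s = s :=
  calc swap a b '' s = id '' s := image_congr fun _ hx ↦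
        swap_apply_of_ne_of_ne (ne_of_mem_of_not_mem hx ha) (ne_of_mem_of_not_mem hx hb)
    _ = s := image_id s

theorem compUpTo_zero {k : ℕ} (γ : Fin k → Perm (Port n)) : compUpTo γ 0 = 1 := by
  simp [compUpTo]

namespace RawGraph

variable {G : RawGraph n α} {e : Edge n α} {F : Set (Port n)}

/-- The condition which `NormalForm` imposes on each edge of a path: the gluing is the transposition
of the two glued ports, and the endpoints have the same ports apart from these two. -/
def IsNormalEdge (G : RawGraph n α) (e : Edge n α) : Prop :=
  e.γ = swap e.p e.q ∧ G.portsAt e.v = insert e.q (G.portsAt e.u \ {e.p})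

theorem mem_portsAt_of_mem_edges (he : e ∈ G.edges) : e.p ∈ G.portsAt e.u :=
  Or.inr ⟨e, he, rfl, rfl⟩

theorem IsGraph.ncard_portsAt_eq (hG : G.IsGraph) (he : e ∈ G.edges) :
    (G.portsAt e.v).ncard = (G.portsAt e.u).ncard := by
  obtain ⟨-, hends, -, -, hcard, -⟩ := hG
  rw [hcard _ (hends e he).1, hcard _ (hends e he).2.1]

theorem IsGraph.target_notMem_portsAt_sdiff (hG : G.IsGraph) (he : e ∈ G.edges)
    (hnormal : G.IsNormalEdge e) : e.q ∉ G.portsAt e.u \ {e.p} := by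
  intro hq
  have hports : G.portsAt e.v = G.portsAt e.u \ {e.p} := by
    rw [hnormal.2, insert_eq_of_mem hq]
  have hlt : (G.portsAt e.v).ncard < (G.portsAt e.u).ncard := by
    rw [hports]
    exact ncard_sdiff_singleton_lt_of_mem (mem_portsAt_of_mem_edges he)
  exact hlt.ne (hG.ncard_portsAt_eq he)

theorem IsGraph.target_notMem_face (hG : G.IsGraph) (he : e ∈ G.edges)
    (hnormal : G.IsNormalEdge e) (hF : F ⊆ G.portsAt e.u) (hp : e.p ∉ F) : e.q ∉ F :=
  fun hq ↦ hG.target_notMem_portsAt_sdiff he hnormal ⟨hF hq, ne_of_mem_of_not_mem hq hp⟩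

theorem IsGraph.image_gluing_face (hG : G.IsGraph) (he : e ∈ G.edges)
    (hnormal : G.IsNormalEdge e) (hF : F ⊆ G.portsAt e.u) (hp : e.p ∉ F) : e.γ '' F = F := by
  rw [hnormal.1]
  exact image_swap_of_notMem hp (hG.target_notMem_face he hnormal hF hp)

theorem IsNormalEdge.face_subset_portsAt (hnormal : G.IsNormalEdge e)
    (hF : F ⊆ G.portsAt e.u) (hp : e.p ∉ F) : F ⊆ G.portsAt e.v := by
  rw [hnormal.2]
  exact (subset_sdiff_singleton hF hp).trans (subset_insert _ _)

theorem IsGraph.image_compUpTo_eq_and_subset_portsAt (hG : G.IsGraph) {k : ℕ} {u : Fin (k + 1) → α}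
    {p : Fin k → Port n} {γ : Fin k → Perm (Port n)} {q : Fin k → Port n}
    (hhinge : IsHinge G k u p γ q F) (hnormal : NormalForm G u p γ q) (m : Fin (k + 1)) :
    compUpTo γ m '' F = F ∧ F ⊆ G.portsAt (u m) := by
  obtain ⟨hpath, -, hF, hconds⟩ := hhinge
  induction m using Fin.induction with
  | zero => exact ⟨by simp [compUpTo_zero], hF⟩
  | succ i ih =>
    obtain ⟨himage, hsubset⟩ := ih
    have hp : p i ∉ F := himage ▸ (hconds i).1
    have hedge : G.IsNormalEdge ⟨u i.castSucc, p i, γ i, u i.succ, q i⟩ := hnormal i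
    refine ⟨?_, hedge.face_subset_portsAt hsubset hp⟩
    calc compUpTo γ i.succ '' F = γ i '' (compUpTo γ i.castSucc '' F) := by
          rw [Fin.val_succ, compUpTo_succ, Perm.coe_mul, image_comp, Fin.val_castSucc]
      _ = γ i '' F := by rw [himage]
      _ = F := hG.image_gluing_face (hpath i) hedge hsubset hp

theorem IsGraph.not_hasTorsion_of_normalForm (hG : G.IsGraph)
    (hnormal : ∀ {k : ℕ} {u : Fin (k + 1) → α} {p : Fin k → Port n}
      {γ : Fin k → Perm (Port n)} {q : Fin k → Port n} {F : Set (Port n)},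
      IsHinge G k u p γ q F → NormalForm G u p γ q) : ¬ HasTorsion G := by
  rintro ⟨-, F, F', hne, k, w, p, γ, q, hhinge, -, -, rfl⟩
  exact hne (hG.image_compUpTo_eq_and_subset_portsAt hhinge (hnormal hhinge) (Fin.last k)).1.symm

end RawGraph

section Sphere

variable {φ : Fin (n + 2) → α}

theorem portsAt_sphereAt (hφ : Function.Injective φ) (i : Fin (n + 2)) :
    (sphereAt φ).portsAt (φ i) = {i}ᶜ := by
  ext j
  constructor
  · rintro (hsemi | ⟨_, ⟨i', j', hne, rfl⟩, hi, rfl⟩)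
    · exact absurd hsemi (notMem_empty _)
    · exact hφ hi ▸ hne.symm
  · intro hj
    exact Or.inr ⟨_, ⟨i, j, Ne.symm hj, rfl⟩, rfl, rfl⟩

theorem isNormalEdge_sphereAt (hφ : Function.Injective φ) {e : Edge n α}
    (he : e ∈ (sphereAt φ).edges) : (sphereAt φ).IsNormalEdge e := by
  obtain ⟨i, j, hij, rfl⟩ := he
  have hports : ({j}ᶜ : Set (Port n)) = insert i ({i}ᶜ \ {j}) := by grind
  refine ⟨swap_comm i j, ?_⟩
  simpa only [portsAt_sphereAt hφ] using hports

theorem image_portsAt_sphereAt (hφ : Function.Injective φ) (i j : Fin (n + 2)) :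
    swap i j '' (sphereAt φ).portsAt (φ i) = (sphereAt φ).portsAt (φ j) := by
  rw [portsAt_sphereAt hφ, portsAt_sphereAt hφ, image_compl_eq (swap i j).bijective,
    image_singleton, swap_apply_left]

theorem ncard_portsAt_sphereAt (hφ : Function.Injective φ) (i : Fin (n + 2)) :
    ((sphereAt φ).portsAt (φ i)).ncard = n + 1 := by
  rw [portsAt_sphereAt hφ, ncard_compl, ncard_singleton, Nat.card_fin, Nat.add_succ_sub_one]

theorem sphereAt_isGraph (hφ : Function.Injective φ) : (sphereAt φ).IsGraph := by
  refine ⟨fun _ hs ↦ absurd hs (notMem_empty _), ?_, fun _ _ ↦ notMem_empty _, ?_, ?_, ?_, ?_⟩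
  · rintro _ ⟨i, j, hij, rfl⟩
    exact ⟨mem_range_self i, mem_range_self j, Perm.sign_swap hij⟩
  · rintro _ ⟨i, j, -, rfl⟩ _ ⟨i', j', -, rfl⟩ hi hj
    obtain rfl : i = i' := hφ hi
    obtain rfl : j = j' := hj
    rfl
  · rintro _ ⟨i, rfl⟩
    exact ncard_portsAt_sphereAt hφ i
  · rintro _ ⟨i, j, -, rfl⟩
    exact ⟨image_portsAt_sphereAt hφ i j, swap_apply_right i j⟩
  · rintro _ ⟨i, j, hij, rfl⟩
    exact ⟨j, i, hij.symm, by rw [Edge.inv, swap_inv, swap_comm]⟩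

theorem normalForm_sphereAt (hφ : Function.Injective φ) {k : ℕ} {u : Fin (k + 1) → α}
    {p : Fin k → Port n} {γ : Fin k → Perm (Port n)} {q : Fin k → Port n}
    (hpath : IsPath (sphereAt φ) k u p γ q) : NormalForm (sphereAt φ) u p γ q :=
  fun i ↦ isNormalEdge_sphereAt hφ (hpath i)

end Sphere

/-- The canonical sphere `∂Δ_{n+1}` is a graph, all its hinges (indeed all
its paths) are in normal form, and it contains no torsion. -/
theorem canonical_sphere_sound {n : ℕ} {α : Type} (φ : Fin (n+2) → α)
    (hφ : Function.Injective φ) :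
    (sphereAt φ).IsGraph ∧
    (∀ (k : ℕ) (u : Fin (k+1) → α) (p : Fin k → Port n)
        (γ : Fin k → Equiv.Perm (Port n)) (q : Fin k → Port n),
        IsPath (sphereAt φ) k u p γ q → NormalForm (sphereAt φ) u p γ q) ∧
    ¬ HasTorsion (sphereAt φ) :=
  ⟨sphereAt_isGraph hφ,
    fun _ _ _ _ _ hpath ↦ normalForm_sphereAt hφ hpath,
    (sphereAt_isGraph hφ).not_hasTorsion_of_normalForm fun hhinge ↦
      normalForm_sphereAt hφ hhinge.1⟩

end CDDM
end

section
/- If f is a strongly-rotation-commuting local rule of radius r and F is the causal graph dynamics it induces, i.e., F(G) = ⋃_{v∈G} f(G^r_v), then F is rotation-commuting: for every graph G and every rotation sequence r̄ there exists a rotation sequence r̄* such that F(r̄ G) = r̄* F(G). -/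
namespace CDDM

open Equiv Set

variable {n : ℕ} {α β : Type}

/-!
A rotation sequence acts on a graph only through the field of even permutations `u ↦ seqAt s u`,
and every finitely supported field arises in this way. Rotations do not move vertices, so the disks
of `applySeq s G` are the rotated disks of `G`, and each of their images under the local rule is the
image of the unrotated disk, rotated by a conjugate of `s`. Strong rotation-commutation makes the
conjugates of two intersecting disks agree on common vertices, so they glue to one field on the
union. Its support is finite because balls are finite, whence `s` meets only finitely many disks,
and on the other disks the conjugate may be taken trivial.

The compound name `∅` needs care: two disjoint disks may both produce it, with conjugates that
differ there. If it has a neighbour `c ≠ ∅` in one image, consistency puts `c` in every image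
containing `∅`, so all these disks intersect; otherwise any of the conjugates can be used at `∅`.
-/

theorem isRotation_one : IsRotation (1 : Perm (Port n)) := map_one _

theorem IsRotation.mul {a b : Perm (Port n)} (ha : IsRotation a) (hb : IsRotation b) :
    IsRotation (a * b) :=
  (map_mul Perm.sign a b).trans (by rw [ha, hb, one_mul])

namespace RawGraph.IsGraph

variable {G : RawGraph n α} {e : Edge n α}

theorem semi_mem (hG : G.IsGraph) {s : α × Port n} (hs : s ∈ G.semis) : s.1 ∈ G.verts := hG.1 s hs

theorem source_mem (hG : G.IsGraph) (he : e ∈ G.edges) : e.u ∈ G.verts := (hG.2.1 e he).1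

theorem target_mem (hG : G.IsGraph) (he : e ∈ G.edges) : e.v ∈ G.verts := (hG.2.1 e he).2.1

theorem isGluing (hG : G.IsGraph) (he : e ∈ G.edges) : IsGluing e.γ := (hG.2.1 e he).2.2

theorem notMem_semis (hG : G.IsGraph) (he : e ∈ G.edges) : (e.u, e.p) ∉ G.semis := hG.2.2.1 e he

theorem edge_eq (hG : G.IsGraph) {e' : Edge n α} (he : e ∈ G.edges) (he' : e' ∈ G.edges)
    (hu : e.u = e'.u) (hp : e.p = e'.p) : e = e' :=
  hG.2.2.2.1 e he e' he' hu hp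

theorem ncard_portsAt (hG : G.IsGraph) {u : α} (hu : u ∈ G.verts) : (G.portsAt u).ncard = n + 1 :=
  hG.2.2.2.2.1 u hu

theorem image_portsAt_s6 (hG : G.IsGraph) (he : e ∈ G.edges) :
    e.γ '' G.portsAt e.u = G.portsAt e.v :=
  (hG.2.2.2.2.2.1 e he).1

theorem gluing_apply (hG : G.IsGraph) (he : e ∈ G.edges) : e.γ e.p = e.q :=
  (hG.2.2.2.2.2.1 e he).2

theorem inv_mem (hG : G.IsGraph) (he : e ∈ G.edges) : e.inv ∈ G.edges := hG.2.2.2.2.2.2 e he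

end RawGraph.IsGraph

/-! ### Rotation by a field of permutations -/

/-- The action on an edge of a field `g` of port permutations, which rotates every vertex `u` by
`g u` simultaneously. -/
def Edge.rotate (g : α → Perm (Port n)) (e : Edge n α) : Edge n α :=
  ⟨e.u, g e.u e.p, g e.v * e.γ * (g e.u)⁻¹, e.v, g e.v e.q⟩

/-- The action on a graph of a field `g` of port permutations, which rotates every vertex `u` by
`g u` simultaneously. Unlike for rotation sequences, `g` may be nontrivial at infinitely many
vertices. -/
def RawGraph.rotate (g : α → Perm (Port n)) (G : RawGraph n α) : RawGraph n α where
  verts := G.verts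
  semis := (fun s => (s.1, g s.1 s.2)) '' G.semis
  edges := Edge.rotate g '' G.edges

section Rotate

variable {g g' : α → Perm (Port n)} {G : RawGraph n α}

theorem Edge.rotate_congr {e : Edge n α} (hu : g e.u = g' e.u) (hv : g e.v = g' e.v) :
    e.rotate g = e.rotate g' := by
  simp only [Edge.rotate, hu, hv]

theorem Edge.inv_rotate (e : Edge n α) : (e.rotate g).inv = e.inv.rotate g := by
  simp only [Edge.rotate, Edge.inv, mul_inv_rev, inv_inv, mul_assoc]

theorem Edge.rotate_mul (g g' : α → Perm (Port n)) (e : Edge n α) :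
    e.rotate (g * g') = (e.rotate g').rotate g := by
  simp [Edge.rotate, mul_assoc]

theorem RawGraph.rotate_one (G : RawGraph n α) : G.rotate 1 = G := by
  have edge_rotate_one : Edge.rotate (1 : α → Perm (Port n)) = id := by
    funext e
    simp [Edge.rotate]
  ext1 <;> simp [RawGraph.rotate, edge_rotate_one]

theorem RawGraph.rotate_mul (g g' : α → Perm (Port n)) (G : RawGraph n α) :
    G.rotate (g * g') = (G.rotate g').rotate g := by
  refine RawGraph.ext rfl ?_ ?_
  · simp [RawGraph.rotate, image_image]
  · simp [RawGraph.rotate, image_image, Edge.rotate_mul]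

theorem mem_semis_rotate {u : α} {p : Port n} :
    (u, p) ∈ (G.rotate g).semis ↔ (u, (g u)⁻¹ p) ∈ G.semis := by
  constructor
  · rintro ⟨⟨u, q⟩, hq, ⟨⟩⟩
    simpa using hq
  · exact fun h => ⟨_, h, by simp⟩

theorem portsAt_rotate (g : α → Perm (Port n)) (G : RawGraph n α) (u : α) :
    (G.rotate g).portsAt u = g u '' G.portsAt u := by
  ext p
  constructor
  · rintro (hp | ⟨_, ⟨e, he, rfl⟩, rfl, rfl⟩)
    · exact ⟨(g u)⁻¹ p, .inl (mem_semis_rotate.1 hp), by simp⟩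
    · exact ⟨e.p, .inr ⟨e, he, rfl, rfl⟩, rfl⟩
  · rintro ⟨q, hq | ⟨e, he, rfl, rfl⟩, rfl⟩
    · exact .inl ⟨(u, q), hq, rfl⟩
    · exact .inr ⟨_, ⟨e, he, rfl⟩, rfl, rfl⟩

theorem IsGluing.rotate {e : Edge n α} (he : IsGluing e.γ) (hg : ∀ u, IsRotation (g u)) :
    IsGluing (e.rotate g).γ := by
  unfold IsGluing IsRotation at *
  simp [Edge.rotate, he, hg]

theorem RawGraph.IsGraph.rotate (hG : G.IsGraph) (hg : ∀ u, IsRotation (g u)) :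
    (G.rotate g).IsGraph := by
  refine ⟨?_, ?_, ?_, ?_, ?_, ?_, ?_⟩
  · rintro _ ⟨s, hs, rfl⟩
    exact hG.semi_mem (s := s) hs
  · rintro _ ⟨e, he, rfl⟩
    exact ⟨hG.source_mem (e := e) he, hG.target_mem (e := e) he, (hG.isGluing he).rotate hg⟩
  · rintro _ ⟨e, he, rfl⟩ hs
    exact hG.notMem_semis he (by simpa [Edge.rotate] using mem_semis_rotate.1 hs)
  · rintro _ ⟨e, he, rfl⟩ _ ⟨e', he', rfl⟩ (hu : e.u = e'.u) (hp : g e.u e.p = g e'.u e'.p)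
    rw [hu] at hp
    rw [hG.edge_eq he he' hu ((g e'.u).injective hp)]
  · intro u hu
    rw [portsAt_rotate, ncard_image_of_injective _ (g u).injective]
    exact hG.ncard_portsAt hu
  · rintro _ ⟨e, he, rfl⟩
    rw [portsAt_rotate, portsAt_rotate]
    constructor
    · simp [Edge.rotate, ← hG.image_portsAt_s6 he, image_image]
    · simp [Edge.rotate, hG.gluing_apply he]
  · rintro _ ⟨e, he, rfl⟩
    exact ⟨e.inv, hG.inv_mem he, e.inv_rotate.symm⟩

theorem adj_rotate {u v : α} : Adj (G.rotate g) u v ↔ Adj G u v := by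
  simp only [Adj, RawGraph.rotate, exists_mem_image, Edge.rotate]

theorem ReachLE.mono_adj {H : RawGraph n α} (hadj : ∀ u v, Adj G u v → Adj H u v) {d : ℕ} {u v : α}
    (h : ReachLE G d u v) : ReachLE H d u v := by
  induction h with
  | refl d u => exact .refl d u
  | step huv _ ih => exact .step (hadj _ _ huv) ih

theorem ball_rotate (g : α → Perm (Port n)) (G : RawGraph n α) (v : α) (d : ℕ) :
    ball (G.rotate g) v d = ball G v d :=
  Subset.antisymm (fun _ => ReachLE.mono_adj fun _ _ => adj_rotate.1)
    (fun _ => ReachLE.mono_adj fun _ _ => adj_rotate.2)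

theorem inducedSub_rotate (g : α → Perm (Port n)) (G : RawGraph n α) (W : Set α) :
    inducedSub (G.rotate g) W = (inducedSub G W).rotate g := by
  refine RawGraph.ext rfl ?_ ?_
  · ext ⟨u, p⟩
    rw [mem_semis_rotate]
    refine and_congr Iff.rfl (or_congr mem_semis_rotate ?_)
    constructor
    · rintro ⟨_, ⟨e, he, rfl⟩, rfl, rfl, hv⟩
      exact ⟨e, he, rfl, by simp [Edge.rotate], hv⟩
    · rintro ⟨e, he, rfl, hp, hv⟩
      exact ⟨_, ⟨e, he, rfl⟩, rfl, by simp [Edge.rotate, hp], hv⟩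
  · ext e
    constructor
    · rintro ⟨⟨e, he, rfl⟩, hW⟩
      exact ⟨e, ⟨he, hW⟩, rfl⟩
    · rintro ⟨e, ⟨he, hW⟩, rfl⟩
      exact ⟨⟨e, he, rfl⟩, hW⟩

theorem disk_rotate (g : α → Perm (Port n)) (G : RawGraph n α) (v : α) (r : ℕ) :
    disk (G.rotate g) v r = (disk G v r).rotate g := by
  rw [disk, ball_rotate, inducedSub_rotate, disk]

theorem isDisk_disk (hG : G.IsGraph) {v : α} (hv : v ∈ G.verts) (r : ℕ) : IsDisk (disk G v r) r :=
  ⟨G, v, hG, hv, rfl⟩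

theorem rotate_inducedSub_congr {W : Set α} (h : EqOn g g' W) :
    (inducedSub G W).rotate g = (inducedSub G W).rotate g' := by
  refine RawGraph.ext rfl (image_congr fun s hs => ?_) (image_congr fun e he => ?_)
  · rw [h hs.1.2]
  · exact Edge.rotate_congr (h he.2.1) (h he.2.2)

end Rotate

/-! ### Rotation sequences as finitely supported fields -/

section RotSeq

theorem rotG_eq_rotate [DecidableEq α] (a : Perm (Port n)) (u : α) (G : RawGraph n α) :
    rotG a u G = G.rotate (Pi.mulSingle u a) := by
  refine RawGraph.ext rfl (image_congr fun s _ => ?_) (image_congr fun e _ => ?_)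
  · by_cases h : s.1 = u <;> simp [h]
  · by_cases hu : e.u = u <;> by_cases hv : e.v = u <;>
      simp [rotEdge, Edge.rotate, hu, hv]

theorem seqAt_nil : seqAt ([] : RotSeq n α) = 1 := rfl

theorem seqAt_cons [DecidableEq α] (x : α × Perm (Port n)) (s : RotSeq n α) :
    seqAt (x :: s) = Pi.mulSingle x.1 x.2 * seqAt s := by
  funext u
  by_cases h : x.1 = u
  · subst h
    simp [seqAt]
  · simp [seqAt, h, Ne.symm h]

theorem applySeq_eq_rotate (s : RotSeq n α) (G : RawGraph n α) :
    applySeq s G = G.rotate (seqAt s) := by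
  classical
  induction s with
  | nil => exact (RawGraph.rotate_one G).symm
  | cons x s ih =>
    calc applySeq (x :: s) G = rotG x.2 x.1 (applySeq s G) := rfl
      _ = G.rotate (seqAt (x :: s)) := by rw [ih, rotG_eq_rotate, seqAt_cons, RawGraph.rotate_mul]

theorem isRotation_seqAt {s : RotSeq n α} (hs : IsRotSeq s) (u : α) : IsRotation (seqAt s u) := by
  classical
  induction s with
  | nil => exact isRotation_one
  | cons x s ih =>
    obtain ⟨hx, hs⟩ := List.forall_mem_cons.1 hs
    rw [seqAt_cons, Pi.mul_apply, Pi.mulSingle_apply]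
    split_ifs
    · exact hx.mul (ih hs)
    · exact isRotation_one.mul (ih hs)

theorem finite_mulSupport_seqAt (s : RotSeq n α) : (Function.mulSupport (seqAt s)).Finite := by
  classical
  induction s with
  | nil => simp [seqAt_nil]
  | cons x s ih =>
    rw [seqAt_cons]
    exact (((finite_singleton x.1).subset Pi.mulSupport_mulSingle_subset).union ih).subset
      (Function.mulSupport_mul _ _)

theorem finite_mulSupport_of_eq_one_or_exists_eq {ι α M : Type*} [One M]
    {fs : ι → α → M} {f : α → M} (hfs : ∀ i, (Function.mulSupport (fs i)).Finite)
    (hfin : {i | fs i ≠ 1}.Finite) (hf : ∀ c, f c = 1 ∨ ∃ i, f c = fs i c) :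
    (Function.mulSupport f).Finite := by
  refine (hfin.biUnion fun i _ => hfs i).subset fun c hc => ?_
  obtain ⟨i, hi⟩ := (hf c).resolve_left hc
  have hic : fs i c ≠ 1 := hi ▸ hc
  exact mem_biUnion (show fs i ≠ 1 from fun h => hic (congrFun h c)) hic

theorem seqAt_map_of_nodup [DecidableEq α] (g : α → Perm (Port n)) {l : List α} (hl : l.Nodup)
    (u : α) : seqAt (l.map fun c => (c, g c)) u = if u ∈ l then g u else 1 := by
  induction l with
  | nil => simp [seqAt_nil]
  | cons c l ih =>
    obtain ⟨hc, hl⟩ := List.nodup_cons.1 hl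
    rw [List.map_cons, seqAt_cons, Pi.mul_apply, ih hl]
    by_cases h : u = c
    · subst h
      simp [hc]
    · simp [h]

theorem exists_isRotSeq_seqAt_eq {g : α → Perm (Port n)} (hfin : (Function.mulSupport g).Finite)
    (hg : ∀ u, IsRotation (g u)) : ∃ s : RotSeq n α, IsRotSeq s ∧ seqAt s = g := by
  classical
  refine ⟨hfin.toFinset.toList.map fun c => (c, g c), ?_, ?_⟩
  · simpa [IsRotSeq] using fun u _ => hg u
  · funext u
    rw [seqAt_map_of_nodup g (Finset.nodup_toList _)]
    by_cases h : g u = 1 <;> simp [h]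

theorem verts_applySeq (s : RotSeq n α) (G : RawGraph n α) : (applySeq s G).verts = G.verts := by
  rw [applySeq_eq_rotate, RawGraph.rotate]

theorem RawGraph.IsGraph.applySeq {s : RotSeq n α} {G : RawGraph n α} (hG : G.IsGraph)
    (hs : IsRotSeq s) : (applySeq s G).IsGraph := by
  rw [applySeq_eq_rotate]
  exact hG.rotate (isRotation_seqAt hs)

theorem disk_applySeq (s : RotSeq n α) (G : RawGraph n α) (v : α) (r : ℕ) :
    disk (applySeq s G) v r = applySeq s (disk G v r) := by
  rw [applySeq_eq_rotate, disk_rotate, applySeq_eq_rotate]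

theorem applySeq_disk_of_disjoint {s : RotSeq n α} {G : RawGraph n α} {v : α} {r : ℕ}
    (h : Disjoint (ball G v (r + 1)) (Function.mulSupport (seqAt s))) :
    applySeq s (disk G v r) = disk G v r := by
  have seqAt_eq_one : EqOn (seqAt s) 1 (ball G v (r + 1)) := fun _ hu =>
    Function.notMem_mulSupport.1 (disjoint_left.1 h hu)
  rw [applySeq_eq_rotate, disk, rotate_inducedSub_congr seqAt_eq_one, RawGraph.rotate_one]

end RotSeq

/-! ### Finiteness of balls -/

section Ball

variable {G : RawGraph n α}

theorem Adj.symm (hG : G.IsGraph) {u v : α} (h : Adj G u v) : Adj G v u := by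
  obtain ⟨e, he, rfl, rfl⟩ := h
  exact ⟨e.inv, hG.inv_mem he, rfl, rfl⟩

theorem ReachLE.snoc {d : ℕ} {u v w : α} (h : ReachLE G d u v) (hvw : Adj G v w) :
    ReachLE G (d + 1) u w := by
  induction h with
  | refl d u => exact .step hvw (.refl d w)
  | step huv _ ih => exact .step huv (ih hvw)

theorem ReachLE.symm (hG : G.IsGraph) {d : ℕ} {u v : α} (h : ReachLE G d u v) :
    ReachLE G d v u := by
  induction h with
  | refl d u => exact .refl d u
  | step huv _ ih => exact ih.snoc (huv.symm hG)

theorem finite_setOf_adj (hG : G.IsGraph) (u : α) : {v | Adj G u v}.Finite := by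
  have finite_edges : {e ∈ G.edges | e.u = u}.Finite :=
    .of_finite_image (f := Edge.p) (toFinite _) fun e he e' he' hp =>
      hG.edge_eq he.1 he'.1 (he.2.trans he'.2.symm) hp
  refine (finite_edges.image Edge.v).subset ?_
  rintro v ⟨e, he, hu, hv⟩
  exact ⟨e, ⟨he, hu⟩, hv⟩

theorem finite_ball (hG : G.IsGraph) (u : α) (d : ℕ) : (ball G u d).Finite := by
  induction d generalizing u with
  | zero =>
    refine (finite_singleton u).subset ?_
    rintro v ⟨⟩
    rfl
  | succ d ih =>
    refine (((finite_setOf_adj hG u).biUnion fun v _ => ih v).insert u).subset ?_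
    rintro w (_ | ⟨huv, hvw⟩)
    · exact mem_insert u _
    · exact mem_insert_of_mem u (mem_biUnion huv hvw)

theorem finite_setOf_not_disjoint_ball (hG : G.IsGraph) (d : ℕ) {S : Set α} (hS : S.Finite) :
    {v | ¬Disjoint (ball G v d) S}.Finite := by
  refine (hS.biUnion fun u _ => finite_ball hG u d).subset fun v hv => ?_
  obtain ⟨u, hvu, hu⟩ := not_disjoint_iff.1 hv
  exact mem_biUnion hu (ReachLE.symm hG hvu)

end Ball

/-! ### Unions of consistent families -/

section Consistent

variable {G H : RawGraph n α}

theorem Consistent.symm (h : Consistent G H) : Consistent H G := fun u hu v hv i j γ =>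
  (h u hu.symm v hv.symm i j γ).symm

-- The identity is not a gluing, so `(u:i, 1, u:i)` is never an edge and isolates the semi-edges in
-- the definition of consistency.
theorem Consistent.mem_semis (h : Consistent G H) (hG : G.IsGraph) (hH : H.IsGraph)
    {s : α × Port n} (hs : s ∈ G.semis) (hsH : s.1 ∈ H.verts) : s ∈ H.semis := by
  have hsG : s.1 ∈ G.verts := hG.semi_mem hs
  refine ((h s.1 ⟨hsG, hsH⟩ s.1 (.inl hsG) s.2 s.2 1).1 (.inr hs)).resolve_left fun he => ?_
  simpa [IsGluing] using hH.isGluing he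

theorem Consistent.mem_edges (h : Consistent G H) (hG : G.IsGraph) (hH : H.IsGraph)
    {e : Edge n α} (he : e ∈ G.edges) (heH : e.u ∈ H.verts) : e ∈ H.edges := by
  refine ((h e.u ⟨hG.source_mem he, heH⟩ e.v (.inl (hG.target_mem he)) e.p e.q e.γ).1
    (.inl he)).resolve_right fun hs => ?_
  exact hG.notMem_semis he (h.symm.mem_semis hH hG hs (hG.source_mem he))

end Consistent

section UnionFam

variable {ι : Type} {H : ι → RawGraph n α}

theorem mem_verts_unionFam {c : α} : c ∈ (unionFam H).verts ↔ ∃ i, c ∈ (H i).verts := mem_iUnion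

theorem mem_edges_unionFam_iff (hH : ∀ i, (H i).IsGraph) (hcons : ∀ i j, Consistent (H i) (H j))
    {i : ι} {e : Edge n α} (hi : e.u ∈ (H i).verts) :
    e ∈ (unionFam H).edges ↔ e ∈ (H i).edges := by
  constructor
  · intro he
    obtain ⟨j, hj⟩ := mem_iUnion.1 he
    exact (hcons j i).mem_edges (hH j) (hH i) hj hi
  · exact fun he => mem_iUnion.2 ⟨i, he⟩

theorem mem_semis_unionFam_iff (hH : ∀ i, (H i).IsGraph) (hcons : ∀ i j, Consistent (H i) (H j))
    {i : ι} {s : α × Port n} (hi : s.1 ∈ (H i).verts) :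
    s ∈ (unionFam H).semis ↔ s ∈ (H i).semis := by
  constructor
  · rintro ⟨⟨j, hj⟩, -⟩
    exact (hcons j i).mem_semis (hH j) (hH i) hj hi
  · refine fun hs => ⟨⟨i, hs⟩, ?_⟩
    rintro j ⟨u, p, γ, v, q⟩ he ⟨rfl, rfl⟩
    exact (hH j).notMem_semis he ((hcons i j).mem_semis (hH i) (hH j) hs ((hH j).source_mem he))

variable {gs : ι → α → Perm (Port n)} {g : α → Perm (Port n)}

theorem unionFam_rotate (hH : ∀ i, (H i).IsGraph) (hcons : ∀ i j, Consistent (H i) (H j))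
    (hgs : ∀ i c, IsRotation (gs i c))
    (hcons' : ∀ i j, Consistent ((H i).rotate (gs i)) ((H j).rotate (gs j)))
    (hg : ∀ c ∈ (unionFam H).verts, ∃ i, c ∈ (H i).verts ∧ g c = gs i c ∧
      ∀ e ∈ (H i).edges, e.u = c → g e.v = gs i e.v) :
    unionFam (fun i => (H i).rotate (gs i)) = (unionFam H).rotate g := by
  have hH' : ∀ i, ((H i).rotate (gs i)).IsGraph := fun i => (hH i).rotate (hgs i)
  refine RawGraph.ext rfl ?_ ?_
  · ext ⟨c, p⟩
    rw [mem_semis_rotate]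
    by_cases hc : c ∈ (unionFam H).verts
    · obtain ⟨i, hi, hgi, -⟩ := hg c hc
      rw [mem_semis_unionFam_iff hH' hcons' (i := i) (s := (c, p)) hi, mem_semis_rotate,
        mem_semis_unionFam_iff hH hcons hi, hgi]
    · refine iff_of_false ?_ ?_ <;> rintro ⟨⟨i, hi⟩, -⟩
      · exact hc (mem_verts_unionFam.2 ⟨i, (hH' i).semi_mem hi⟩)
      · exact hc (mem_verts_unionFam.2 ⟨i, (hH i).semi_mem hi⟩)
  · ext e
    constructor
    · intro he
      obtain ⟨j, hj⟩ := mem_iUnion.1 he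
      obtain ⟨i, hi, hgi, hnbr⟩ := hg e.u (mem_verts_unionFam.2 ⟨j, (hH' j).source_mem hj⟩)
      obtain ⟨e, hei, rfl⟩ := (mem_edges_unionFam_iff hH' hcons' (i := i) hi).1 he
      exact ⟨e, mem_iUnion.2 ⟨i, hei⟩, Edge.rotate_congr hgi (hnbr e hei rfl)⟩
    · rintro ⟨e, he, rfl⟩
      obtain ⟨j, hj⟩ := mem_iUnion.1 he
      obtain ⟨i, hi, hgi, hnbr⟩ := hg e.u (mem_verts_unionFam.2 ⟨j, (hH j).source_mem hj⟩)
      have hei : e ∈ (H i).edges := (mem_edges_unionFam_iff hH hcons hi).1 he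
      exact mem_iUnion.2 ⟨i, e, hei, (Edge.rotate_congr hgi (hnbr e hei rfl)).symm⟩

-- Either `e` is a loop at `c₀`, or it has an endpoint other than `c₀`, which lies in `H j` as well.
theorem eq_at_target_of_eqOn {c₀ : α} (hH : ∀ i, (H i).IsGraph)
    (hcons : ∀ i j, Consistent (H i) (H j))
    (hagree : ∀ i j, ∀ c ∈ (H i).verts ∩ (H j).verts, c ≠ c₀ →
      EqOn (gs i) (gs j) ((H i).verts ∩ (H j).verts))
    {i j : ι} {e : Edge n α} (he : e ∈ (H i).edges) (hu : g e.u = gs i e.u)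
    (hj : e.v ∈ (H j).verts) (hv : g e.v = gs j e.v) : g e.v = gs i e.v := by
  have hvi : e.v ∈ (H i).verts := (hH i).target_mem he
  by_cases hv₀ : e.v = c₀
  · by_cases hu₀ : e.u = c₀
    · rw [hv₀, ← hu₀, hu]
    · have inv_mem : e.inv ∈ (H j).edges :=
        (hcons i j).mem_edges (hH i) (hH j) ((hH i).inv_mem he) hj
      have huj : e.u ∈ (H j).verts := (hH j).target_mem inv_mem
      exact hv.trans (hagree j i e.u ⟨huj, (hH i).source_mem he⟩ hu₀ ⟨hj, hvi⟩)
  · exact hv.trans (hagree j i e.v ⟨hj, hvi⟩ hv₀ ⟨hj, hvi⟩)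

theorem exists_unionFam_rotate_eq (c₀ : α) (hH : ∀ i, (H i).IsGraph)
    (hcons : ∀ i j, Consistent (H i) (H j)) (hgs : ∀ i c, IsRotation (gs i c))
    (hcons' : ∀ i j, Consistent ((H i).rotate (gs i)) ((H j).rotate (gs j)))
    (hagree : ∀ i j, ∀ c ∈ (H i).verts ∩ (H j).verts, c ≠ c₀ →
      EqOn (gs i) (gs j) ((H i).verts ∩ (H j).verts)) :
    ∃ g : α → Perm (Port n), (∀ c, g c = 1 ∨ ∃ i, g c = gs i c) ∧
      unionFam (fun i => (H i).rotate (gs i)) = (unionFam H).rotate g := by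
  have exists_value : ∀ c, ∃ a, (a = 1 ∨ ∃ i, a = gs i c) ∧
      (c ∈ (unionFam H).verts → ∃ i, c ∈ (H i).verts ∧ a = gs i c) := by
    intro c
    by_cases hc : c ∈ (unionFam H).verts
    · obtain ⟨i, hi⟩ := mem_verts_unionFam.1 hc
      exact ⟨gs i c, .inr ⟨i, rfl⟩, fun _ => ⟨i, hi, rfl⟩⟩
    · exact ⟨1, .inl rfl, fun h => absurd h hc⟩
  choose g hg_values hg_mem using exists_value
  refine ⟨g, hg_values, unionFam_rotate hH hcons hgs hcons' fun c hc => ?_⟩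
  obtain ⟨i, hi, hgi⟩ := hg_mem c hc
  refine ⟨i, hi, hgi, ?_⟩
  rintro e he rfl
  obtain ⟨j, hj, hgj⟩ := hg_mem e.v (mem_verts_unionFam.2 ⟨i, (hH i).target_mem he⟩)
  exact eq_at_target_of_eqOn hH hcons hagree he hgi hj hgj

end UnionFam

/-! ### Conjugates of a rotation sequence -/

section Conjugate

variable {r : ℕ} {L : LocalRule n r} {G : RawGraph n ℕ} {s : RotSeq n ℕ}

/-- `s'` is a conjugate of the rotation sequence `s` on `D` for the local rule `L`: rotating `D` by
`s` before applying `L` amounts to rotating the image of `D` by `s'`. -/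
def IsConjugate (L : LocalRule n r) (s : RotSeq n ℕ) (D : RawGraph n ℕ) (s' : RotSeq n CName) :
    Prop :=
  IsRotSeq s' ∧ L.f (applySeq s D) = applySeq s' (L.f D)

theorem IsConjugate.rotate_eq {v : ℕ} {s' : RotSeq n CName} (h : IsConjugate L s (disk G v r) s') :
    L.f (disk (applySeq s G) v r) = (L.f (disk G v r)).rotate (seqAt s') := by
  rw [disk_applySeq, h.2, applySeq_eq_rotate]

theorem isConjugate_nil_of_disjoint {v : ℕ}
    (h : Disjoint (ball G v (r + 1)) (Function.mulSupport (seqAt s))) :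
    IsConjugate L s (disk G v r) [] :=
  ⟨List.forall_mem_nil _, congrArg L.f (applySeq_disk_of_disjoint h)⟩

theorem StronglyRotCommuting.exists_isConjugate (hL : StronglyRotCommuting L) (hG : G.IsGraph)
    (hs : IsRotSeq s) :
    ∃ σ : G.verts → RotSeq n CName,
      (∀ v : G.verts, IsConjugate L s (disk G v r) (σ v)) ∧ {v | σ v ≠ []}.Finite := by
  let untouched : Set ℕ := {v | Disjoint (ball G v (r + 1)) (Function.mulSupport (seqAt s))}
  have exists_conj : ∀ v : G.verts, ∃ s', IsConjugate L s (disk G v r) s' ∧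
      (↑v ∈ untouched → s' = []) := by
    intro v
    by_cases hv : ↑v ∈ untouched
    · exact ⟨[], isConjugate_nil_of_disjoint hv, fun _ => rfl⟩
    · obtain ⟨s', hs'⟩ := hL.1 _ (isDisk_disk hG v.2 r) s hs
      exact ⟨s', hs', fun h => absurd h hv⟩
  choose σ hσ hσ_nil using exists_conj
  have finite_touched : untouchedᶜ.Finite :=
    finite_setOf_not_disjoint_ball hG (r + 1) (finite_mulSupport_seqAt s)
  exact ⟨σ, hσ, (finite_touched.preimage Subtype.val_injective.injOn).subset
    fun v hv h => hv (hσ_nil v h)⟩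

theorem StronglyRotCommuting.eqOn_seqAt (hL : StronglyRotCommuting L) (hG : G.IsGraph)
    (hs : IsRotSeq s) {v w : ℕ} (hv : v ∈ G.verts) (hw : w ∈ G.verts) {s₁ s₂ : RotSeq n CName}
    (h₁ : IsConjugate L s (disk G v r) s₁) (h₂ : IsConjugate L s (disk G w r) s₂) {c : CName}
    (hc : c ∈ (L.f (disk G v r)).verts ∩ (L.f (disk G w r)).verts) (hc₀ : c ≠ ∅) :
    EqOn (seqAt s₁) (seqAt s₂) ((L.f (disk G v r)).verts ∩ (L.f (disk G w r)).verts) := by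
  obtain ⟨x, hx⟩ := Finset.nonempty_iff_ne_empty.2 hc₀
  have disks_meet : ((disk G v r).verts ∩ (disk G w r).verts).Nonempty :=
    ⟨x.1, (L.bound _ (isDisk_disk hG hv r) c hc.1 x hx).1,
      (L.bound _ (isDisk_disk hG hw r) c hc.2 x hx).1⟩
  exact hL.2 _ _ ⟨G, v, w, hG, hv, hw, rfl, rfl, disks_meet⟩ s hs s₁ s₂ h₁.1 h₂.1 h₁.2 h₂.2

theorem induced_applySeq {σ : G.verts → RotSeq n CName}
    (hσ : ∀ v : G.verts, IsConjugate L s (disk G v r) (σ v)) :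
    induced L.f r (applySeq s G) =
      unionFam fun v : G.verts => (L.f (disk G v r)).rotate (seqAt (σ v)) := by
  have image_eq : ∀ v : G.verts, L.f (disk (G.rotate (seqAt s)) v r) =
      (L.f (disk G v r)).rotate (seqAt (σ v)) := fun v => by
    rw [← applySeq_eq_rotate, (hσ v).rotate_eq]
  rw [applySeq_eq_rotate]
  exact congrArg unionFam (funext image_eq)

theorem consistent_rotate_of_isConjugate (hG : G.IsGraph) (hs : IsRotSeq s) {v w : ℕ}
    (hv : v ∈ G.verts) (hw : w ∈ G.verts) {s₁ s₂ : RotSeq n CName}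
    (h₁ : IsConjugate L s (disk G v r) s₁) (h₂ : IsConjugate L s (disk G w r) s₂) :
    Consistent ((L.f (disk G v r)).rotate (seqAt s₁)) ((L.f (disk G w r)).rotate (seqAt s₂)) := by
  rw [← h₁.rotate_eq, ← h₂.rotate_eq]
  rw [← verts_applySeq s G] at hv hw
  exact L.consist _ (hG.applySeq hs) v hv w hw

end Conjugate

/-- A strongly-rotation-commuting local rule induces a rotation-commuting
causal graph dynamics. -/
theorem strongly_rot_commuting_induces_rot_commuting {n r : ℕ} (L : LocalRule n r)
    (hL : StronglyRotCommuting L) :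
    RotCommuting (induced L.f r) := by
  intro G hG s hs
  obtain ⟨σ, hσ, hσ_fin⟩ := hL.exists_isConjugate hG hs
  have hσ_rot : ∀ v c, IsRotation (seqAt (σ v) c) := fun v => isRotation_seqAt (hσ v).1
  obtain ⟨g, hg_values, hg⟩ := exists_unionFam_rotate_eq (gs := fun v => seqAt (σ v)) ∅
    (fun v => L.isGraph _ (isDisk_disk hG v.2 r)) (fun v w => L.consist G hG v v.2 w w.2) hσ_rot
    (fun v w => consistent_rotate_of_isConjugate hG hs v.2 w.2 (hσ v) (hσ w))
    (fun v w _ => hL.eqOn_seqAt hG hs v.2 w.2 (hσ v) (hσ w))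
  have hg_fin : (Function.mulSupport g).Finite :=
    finite_mulSupport_of_eq_one_or_exists_eq (fun v => finite_mulSupport_seqAt (σ v))
      (hσ_fin.subset fun v hv h => hv (by rw [h, seqAt_nil])) hg_values
  have hg_rot : ∀ c, IsRotation (g c) := fun c => by
    obtain h | ⟨v, h⟩ := hg_values c <;> rw [h]
    exacts [isRotation_one, hσ_rot v c]
  obtain ⟨s', hs', rfl⟩ := exists_isRotSeq_seqAt_eq hg_fin hg_rot
  exact ⟨s', hs', by rw [induced_applySeq hσ, hg, applySeq_eq_rotate, induced]⟩

end CDDM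
end
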